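/- Let (X_t)_{t∈ℝ} be a strictly stationary real-valued process with E|X_0|^m < ∞ for some m > 2, and suppose X is θ-weakly dependent with coefficients (θ(r))_{r≥0} and constant 1. Then for every r ≥ 0, |Cov(X_0, X_r)| ≤ 9 · E[|X_0|^m]^{1/(m−1)} · θ(r)^{(m−2)/(m−1)}. -/

import Mathlib

open MeasureTheory ProbabilityTheory Filter

noncomputable section

/-- Covariance of two real-valued random variables. -/
def cov {Ω : Type*} [MeasurableSpace Ω] (μ : Measure Ω) (U V : Ω → ℝ) : ℝ :=
  (∫ ω, U ω * V ω ∂μ) - (∫ ω, U ω ∂μ) * (∫ ω, V ω ∂μ)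

/-- `L` is a (nonnegative) Lipschitz bound for `F` with respect to the distance
`δ₁(x,y) = ∑ i ‖x i - y i‖` on `Eᵘ`. -/
def Delta1Lip {E : Type*} [NormedAddCommGroup E] {u : ℕ} (F : (Fin u → E) → ℝ) (L : ℝ) : Prop :=
  0 ≤ L ∧ ∀ x y : Fin u → E, |F x - F y| ≤ L * ∑ i, ‖x i - y i‖

/-- θ-weak dependence of a process with coefficients `θ` and constant `c₀`: `θ r → 0` and the
covariance of a bounded measurable functional of the past and a Lipschitz functional of the
future, separated by a time gap `r`, is controlled by `c₀ v Lip(G) θ(r)`. -/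
def ThetaWeaklyDependent {Ω : Type*} [MeasurableSpace Ω] (μ : Measure Ω)
    {E : Type*} [NormedAddCommGroup E] [MeasurableSpace E]
    (X : ℝ → Ω → E) (θ : ℝ → ℝ) (c₀ : ℝ) : Prop :=
  0 ≤ c₀ ∧ (∀ r, 0 ≤ θ r) ∧ Tendsto θ atTop (nhds 0) ∧
    ∀ (u v : ℕ), 0 < u → 0 < v → ∀ r : ℝ, 0 ≤ r →
      ∀ (i : Fin u → ℝ) (j : Fin v → ℝ), Monotone i → Monotone j →
        (∀ a b, i a + r ≤ j b) →
        ∀ (F : (Fin u → E) → ℝ) (G : (Fin v → E) → ℝ) (LG : ℝ),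
          Measurable F → Measurable G →
          (∀ x, |F x| ≤ 1) → (∀ x, |G x| ≤ 1) →
          Delta1Lip G LG →
          |cov μ (fun ω => F fun a => X (i a) ω) (fun ω => G fun b => X (j b) ω)| ≤
            c₀ * (v : ℝ) * LG * θ r

/-- Strict stationarity of an `ℝ`-indexed process: shifted finite-dimensional marginals have
the same distribution. -/
def StrictlyStationary {Ω : Type*} [MeasurableSpace Ω] (μ : Measure Ω)
    {E : Type*} [MeasurableSpace E] (X : ℝ → Ω → E) : Prop :=
  ∀ (s : ℝ) (u : ℕ) (t : Fin u → ℝ),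
    IdentDistrib (fun ω (a : Fin u) => X (t a + s) ω) (fun ω (a : Fin u) => X (t a) ω) μ μ

lemma aux_pointwise {m k : ℝ} (hm : 2 < m) (hk : 0 < k) {u v p q : ℝ} (hp : |p| ≤ |u|)
    (hq : |q| ≤ |v|) (h : q = 0 ∨ k < |v|) :
    |p| * |q| ≤ k ^ (2 - m) * (|u| ^ m + |v| ^ m) := by
  have hkp : 0 < k ^ (2 - m) := Real.rpow_pos_of_pos hk _
  have hu : 0 ≤ |u| ^ m := Real.rpow_nonneg (abs_nonneg _) _
  have hv : 0 ≤ |v| ^ m := Real.rpow_nonneg (abs_nonneg _) _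
  have key : ∀ z : ℝ, k ≤ z → z * z ≤ k ^ (2 - m) * z ^ m := by
    intro z hz
    have hz0 : 0 < z := lt_of_lt_of_le hk hz
    have h1 : z ^ (2 - m) ≤ k ^ (2 - m) :=
      Real.rpow_le_rpow_of_nonpos hk hz (by linarith)
    have h2 : z * z = z ^ (2 - m) * z ^ m := by
      rw [← Real.rpow_add hz0]
      norm_num
      ring
    rw [h2]
    exact mul_le_mul_of_nonneg_right h1 (Real.rpow_nonneg hz0.le _)
  rcases h with h | h
  · subst h
    simp only [abs_zero, mul_zero]
    positivity
  · have h0 : |p| * |q| ≤ |u| * |v| := mul_le_mul hp hq (abs_nonneg _) (abs_nonneg _)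
    rcases le_total |u| |v| with h1 | h1
    · have := key |v| h.le
      nlinarith [mul_le_mul_of_nonneg_right h1 (abs_nonneg v), mul_nonneg hkp.le hu]
    · have := key |u| (h.le.trans h1)
      nlinarith [mul_le_mul_of_nonneg_left h1 (abs_nonneg u), mul_nonneg hkp.le hv]

lemma aux_sq {m : ℝ} (hm : 2 < m) (x : ℝ) (hx : 0 ≤ x) : x * x ≤ 1 + x ^ m := by
  rcases le_total x 1 with h | h
  · have : 0 ≤ x ^ m := Real.rpow_nonneg hx _
    nlinarith
  · have h1 : x ^ (2 : ℝ) ≤ x ^ m := Real.rpow_le_rpow_of_exponent_le h hm.le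
    have h2 : x ^ (2 : ℝ) = x * x := by
      rw [Real.rpow_two]; ring
    rw [h2] at h1
    linarith

lemma aux_int {Ω : Type*} [MeasurableSpace Ω] (μ : Measure Ω) [IsProbabilityMeasure μ]
    {m : ℝ} (hm : 2 < m) (U P : Ω → ℝ) (hP : Measurable P)
    (hU : Integrable (fun ω => |U ω| ^ m) μ) (hPU : ∀ ω, |P ω| ≤ |U ω|) : Integrable P μ := by
  refine ((integrable_const (2 : ℝ)).add hU).mono' hP.aestronglyMeasurable
    (Eventually.of_forall fun ω => ?_)
  have := aux_sq hm |U ω| (abs_nonneg _)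
  simp only [Real.norm_eq_abs, Pi.add_apply]
  nlinarith [hPU ω, sq_nonneg (|U ω| - 1)]

lemma aux_int_mul {Ω : Type*} [MeasurableSpace Ω] (μ : Measure Ω) [IsProbabilityMeasure μ]
    {m : ℝ} (hm : 2 < m) (U V P Q : Ω → ℝ) (hP : Measurable P) (hQ : Measurable Q)
    (hU : Integrable (fun ω => |U ω| ^ m) μ) (hV : Integrable (fun ω => |V ω| ^ m) μ)
    (hPU : ∀ ω, |P ω| ≤ |U ω|) (hQV : ∀ ω, |Q ω| ≤ |V ω|) :
    Integrable (fun ω => P ω * Q ω) μ := by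
  refine ((integrable_const (2 : ℝ)).add (hU.add hV)).mono' (hP.mul hQ).aestronglyMeasurable
    (Eventually.of_forall fun ω => ?_)
  have h1 := aux_sq hm |U ω| (abs_nonneg _)
  have h2 := aux_sq hm |V ω| (abs_nonneg _)
  have h0 : |P ω| * |Q ω| ≤ |U ω| * |V ω| :=
    mul_le_mul (hPU ω) (hQV ω) (abs_nonneg _) (abs_nonneg _)
  simp only [Real.norm_eq_abs, Pi.add_apply, abs_mul]
  nlinarith [sq_nonneg (|U ω| - |V ω|), mul_self_nonneg |U ω|, mul_self_nonneg |V ω|]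

lemma aux_cov {Ω : Type*} [MeasurableSpace Ω] (μ : Measure Ω) [IsProbabilityMeasure μ]
    {m k M : ℝ} (hm : 2 < m) (hk : 0 < k) (U V P Q : Ω → ℝ) (hP : Measurable P)
    (hQ : Measurable Q)
    (hU : Integrable (fun ω => |U ω| ^ m) μ) (hV : Integrable (fun ω => |V ω| ^ m) μ)
    (hUM : ∫ ω, |U ω| ^ m ∂μ = M) (hVM : ∫ ω, |V ω| ^ m ∂μ = M)
    (hPU : ∀ ω, |P ω| ≤ |U ω|) (hQV : ∀ ω, |Q ω| ≤ |V ω|)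
    (h : ∀ ω, Q ω = 0 ∨ k < |V ω|) :
    |cov μ P Q| ≤ 4 * (M * k ^ (2 - m)) := by
  have iP := aux_int μ hm U P hP hU hPU
  have iQ := aux_int μ hm V Q hQ hV hQV
  have iPQ := aux_int_mul μ hm U V P Q hP hQ hU hV hPU hQV
  have h1 : |∫ ω, P ω * Q ω ∂μ| ≤ k ^ (2 - m) * (M + M) := by
    calc |∫ ω, P ω * Q ω ∂μ| ≤ ∫ ω, |P ω * Q ω| ∂μ := abs_integral_le_integral_abs
      _ ≤ ∫ ω, k ^ (2 - m) * (|U ω| ^ m + |V ω| ^ m) ∂μ := by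
        refine integral_mono iPQ.abs ((hU.add hV).const_mul _) fun ω => ?_
        simp only [abs_mul]
        exact aux_pointwise hm hk (hPU ω) (hQV ω) (h ω)
      _ = k ^ (2 - m) * (M + M) := by
        rw [integral_const_mul, integral_add hU hV, hUM, hVM]
  have h2 : (∫ ω, |P ω| ∂μ) * (∫ ω, |Q ω| ∂μ) ≤ k ^ (2 - m) * (M + M) := by
    have h3 : ∀ ω, |P ω| * (∫ ω', |Q ω'| ∂μ) ≤ k ^ (2 - m) * (|U ω| ^ m + M) := by
      intro ω
      calc |P ω| * (∫ ω', |Q ω'| ∂μ) = ∫ ω', |P ω| * |Q ω'| ∂μ := by rw [integral_const_mul]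
        _ ≤ ∫ ω', k ^ (2 - m) * (|U ω| ^ m + |V ω'| ^ m) ∂μ := by
          refine integral_mono (iQ.abs.const_mul _)
            (((integrable_const _).add hV).const_mul _) fun ω' => ?_
          exact aux_pointwise hm hk (hPU ω) (hQV ω') (h ω')
        _ = _ := by
          rw [integral_const_mul, integral_add (integrable_const _) hV, hVM]
          simp
    calc _ = ∫ ω, |P ω| * (∫ ω', |Q ω'| ∂μ) ∂μ := by rw [integral_mul_const]
      _ ≤ ∫ ω, k ^ (2 - m) * (|U ω| ^ m + M) ∂μ :=
        integral_mono (iP.abs.mul_const _) ((hU.add (integrable_const _)).const_mul _) h3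
      _ = _ := by
        rw [integral_const_mul, integral_add hU (integrable_const _), hUM]
        simp
  have h4 : |(∫ ω, P ω ∂μ) * (∫ ω, Q ω ∂μ)| ≤ k ^ (2 - m) * (M + M) := by
    rw [abs_mul]
    refine le_trans (mul_le_mul abs_integral_le_integral_abs abs_integral_le_integral_abs
      (abs_nonneg _) (integral_nonneg fun _ => abs_nonneg _)) h2
  unfold cov
  have := abs_sub (∫ ω, P ω * Q ω ∂μ) ((∫ ω, P ω ∂μ) * (∫ ω, Q ω ∂μ))
  linarith

/-- Truncation at level `k`. -/
def trunc (k x : ℝ) : ℝ := max (-k) (min k x)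

lemma trunc_meas (k : ℝ) : Measurable (trunc k) := by
  unfold trunc
  fun_prop

lemma trunc_abs_le {k : ℝ} (hk : 0 < k) (x : ℝ) : |trunc k x| ≤ k := by
  unfold trunc
  rw [abs_le]
  exact ⟨le_max_left _ _, max_le (by linarith) (min_le_left _ _)⟩

lemma trunc_lip (k x y : ℝ) : |trunc k x - trunc k y| ≤ |x - y| := by
  unfold trunc
  refine (abs_max_sub_max_le_max _ _ _ _).trans ?_
  refine max_le (by simp) ((abs_min_sub_min_le_max _ _ _ _).trans (max_le (by simp) le_rfl))

lemma trunc_eq {k : ℝ} {x : ℝ} (h : |x| ≤ k) : trunc k x = x := by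
  unfold trunc
  rw [abs_le] at h
  rw [min_eq_right h.2, max_eq_right h.1]

lemma trunc_zero {k : ℝ} (hk : 0 < k) : trunc k 0 = 0 := trunc_eq (by simpa using hk.le)

lemma trunc_abs_le' {k : ℝ} (hk : 0 < k) (x : ℝ) : |trunc k x| ≤ |x| := by
  simpa [trunc_zero hk] using trunc_lip k x 0

lemma rem_abs_le {k : ℝ} (hk : 0 < k) (x : ℝ) : |x - trunc k x| ≤ |x| := by
  unfold trunc
  rcases abs_cases x with ⟨h, h'⟩ | ⟨h, h'⟩ <;> rw [h, abs_le] <;>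
  rcases max_cases (-k) (min k x) with ⟨h1, h2⟩ | ⟨h1, h2⟩ <;>
  rcases min_cases k x with ⟨h3, h4⟩ | ⟨h3, h4⟩ <;> constructor <;> linarith

lemma cov_comm' {Ω : Type*} [MeasurableSpace Ω] (μ : Measure Ω) (U V : Ω → ℝ) :
    cov μ U V = cov μ V U := by
  unfold cov
  simp only [mul_comm]

lemma aux_trunc_cov {Ω : Type*} [MeasurableSpace Ω] (μ : Measure Ω) [IsProbabilityMeasure μ]
    (X : ℝ → Ω → ℝ) (θ : ℝ → ℝ)
    (hθ : ThetaWeaklyDependent μ X θ 1) (r : ℝ) (hr : 0 ≤ r) (k : ℝ) (hk : 0 < k) :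
    |cov μ (fun ω => trunc k (X 0 ω)) (fun ω => trunc k (X r ω))| ≤ k * θ r := by
  obtain ⟨-, -, -, H⟩ := hθ
  have hb : ∀ y, |trunc k y / k| ≤ 1 := by
    intro y
    rw [abs_div, abs_of_pos hk, div_le_one hk]
    exact trunc_abs_le hk y
  have hme : Measurable fun x : Fin 1 → ℝ => trunc k (x 0) / k :=
    ((trunc_meas k).comp (measurable_pi_apply 0)).div_const k
  have := H 1 1 one_pos one_pos r hr (fun _ => 0) (fun _ => r) monotone_const monotone_const
    (by simp) (fun x => trunc k (x 0) / k) (fun x => trunc k (x 0) / k) (1 / k) hme hme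
    (fun x => hb _) (fun x => hb _) ⟨by positivity, fun x y => by
      rw [← sub_div, abs_div, abs_of_pos hk]
      simp only [Fin.sum_univ_one, Real.norm_eq_abs]
      rw [div_eq_mul_one_div, mul_comm]
      exact mul_le_mul_of_nonneg_left (trunc_lip k _ _) (by positivity)⟩
  have e : cov μ (fun ω => trunc k (X 0 ω) / k) (fun ω => trunc k (X r ω) / k)
      = cov μ (fun ω => trunc k (X 0 ω)) (fun ω => trunc k (X r ω)) / (k * k) := by
    unfold cov
    simp only [div_mul_div_comm, integral_div]
    ring
  simp only [e, Nat.cast_one, one_mul] at this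
  rw [abs_div, abs_of_pos (mul_pos hk hk), div_le_iff₀ (mul_pos hk hk)] at this
  refine this.trans (le_of_eq ?_)
  field_simp

lemma aux_main {Ω : Type*} [MeasurableSpace Ω] (μ : Measure Ω) [IsProbabilityMeasure μ]
    (X : ℝ → Ω → ℝ)
    (hXmeas : ∀ t, Measurable (X t))
    (hstat : StrictlyStationary μ X)
    (m : ℝ) (hm : 2 < m)
    (hint : Integrable (fun ω => |X 0 ω| ^ m) μ)
    (θ : ℝ → ℝ)
    (hθ : ThetaWeaklyDependent μ X θ 1) (r : ℝ) (hr : 0 ≤ r) (k : ℝ) (hk : 0 < k) :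
    |cov μ (X 0) (X r)| ≤ k * θ r + 8 * ((∫ ω, |X 0 ω| ^ m ∂μ) * k ^ (2 - m)) := by
  have hid : IdentDistrib (fun ω => |X r ω| ^ m) (fun ω => |X 0 ω| ^ m) μ μ := by
    have h := hstat r 1 (fun _ => 0)
    have h2 := h.comp (u := fun x : Fin 1 → ℝ => |x 0| ^ m) (by fun_prop)
    simpa [Function.comp_def] using h2
  have hintr := hid.integrable_iff.2 hint
  have hMr := hid.integral_eq
  have h0 := aux_trunc_cov μ X θ hθ r hr k hk
  have tm : ∀ t, Measurable fun ω => trunc k (X t ω) := fun t => (trunc_meas k).comp (hXmeas t)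
  have gm : ∀ t, Measurable fun ω => X t ω - trunc k (X t ω) := fun t => (hXmeas t).sub (tm t)
  have hg : ∀ x : ℝ, x - trunc k x = 0 ∨ k < |x| := by
    intro x
    rcases le_or_gt |x| k with h | h
    · left; rw [trunc_eq h, sub_self]
    · right; exact h
  have h1 := aux_cov μ hm hk (X 0) (X r) (X 0) (fun ω => X r ω - trunc k (X r ω)) (hXmeas 0) (gm r)
    hint hintr rfl hMr (fun _ => le_rfl) (fun _ => rem_abs_le hk _) (fun _ => hg _)
  have h2 := aux_cov μ hm hk (X r) (X 0) (fun ω => trunc k (X r ω))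
    (fun ω => X 0 ω - trunc k (X 0 ω)) (tm r) (gm 0)
    hintr hint hMr rfl (fun _ => trunc_abs_le' hk _) (fun _ => rem_abs_le hk _) (fun _ => hg _)
  rw [cov_comm'] at h2
  have e : cov μ (X 0) (X r) = cov μ (fun ω => trunc k (X 0 ω)) (fun ω => trunc k (X r ω))
      + cov μ (X 0) (fun ω => X r ω - trunc k (X r ω))
      + cov μ (fun ω => X 0 ω - trunc k (X 0 ω)) (fun ω => trunc k (X r ω)) := by
    have i0 := aux_int μ hm (X 0) (X 0) (hXmeas 0) hint (fun _ => le_rfl)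
    have ir := aux_int μ hm (X r) (X r) (hXmeas r) hintr (fun _ => le_rfl)
    have it0 := aux_int μ hm (X 0) _ (tm 0) hint (fun _ => trunc_abs_le' hk _)
    have itr := aux_int μ hm (X r) _ (tm r) hintr (fun _ => trunc_abs_le' hk _)
    have j1 := aux_int_mul μ hm (X 0) (X r) (X 0) (X r) (hXmeas 0) (hXmeas r) hint hintr
      (fun _ => le_rfl) (fun _ => le_rfl)
    have j2 := aux_int_mul μ hm (X 0) (X r) (X 0) _ (hXmeas 0) (tm r) hint hintr
      (fun _ => le_rfl) (fun _ => trunc_abs_le' hk _)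
    have j3 := aux_int_mul μ hm (X 0) (X r) _ _ (tm 0) (tm r) hint hintr
      (fun _ => trunc_abs_le' hk _) (fun _ => trunc_abs_le' hk _)
    unfold cov
    simp only [mul_sub, sub_mul]
    rw [integral_sub j1 j2, integral_sub j2 j3, integral_sub i0 it0, integral_sub ir itr]
    ring
  rw [e]
  refine (abs_add_three _ _ _).trans ?_
  linarith

/-- Covariance bound in terms of the θ-weak dependence coefficients:
`|Cov(X₀, X_r)| ≤ 9 E[|X₀|^m]^(1/(m-1)) θ(r)^((m-2)/(m-1))`. -/
theorem abs_cov_le_of_theta_weak_dependence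
    {Ω : Type*} [MeasurableSpace Ω] (μ : Measure Ω) [IsProbabilityMeasure μ]
    (X : ℝ → Ω → ℝ)
    (hXmeas : ∀ t, Measurable (X t))
    (hstat : StrictlyStationary μ X)
    (m : ℝ) (hm : 2 < m)
    (hint : Integrable (fun ω => |X 0 ω| ^ m) μ)
    (θ : ℝ → ℝ)
    (hθ : ThetaWeaklyDependent μ X θ 1) :
    ∀ r : ℝ, 0 ≤ r →
      |cov μ (X 0) (X r)| ≤
        9 * (∫ ω, |X 0 ω| ^ m ∂μ) ^ (1 / (m - 1)) * θ r ^ ((m - 2) / (m - 1)) := by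
  intro r hr
  have H := aux_main μ X hXmeas hstat m hm hint θ hθ r hr
  have hθ0 : 0 ≤ θ r := hθ.2.1 r
  have hM0 : 0 ≤ ∫ ω, |X 0 ω| ^ m ∂μ :=
    integral_nonneg fun _ => Real.rpow_nonneg (abs_nonneg _) _
  generalize (∫ ω, |X 0 ω| ^ m ∂μ) = M at *
  generalize |cov μ (X 0) (X r)| = c at *
  generalize θ r = t at *
  have hm1 : 0 < m - 1 := by linarith
  rcases hM0.eq_or_lt with hM | hM
  · subst hM
    rw [Real.zero_rpow (by positivity)]
    simp only [mul_zero, zero_mul, add_zero] at H ⊢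
    have T : Tendsto (fun k : ℝ => k * t) (nhdsWithin 0 (Set.Ioi 0)) (nhds (0 * t)) :=
      (tendsto_id.mul_const t).mono_left nhdsWithin_le_nhds
    rw [zero_mul] at T
    exact ge_of_tendsto T (eventually_mem_nhdsWithin.mono fun k hk => H k hk)
  rcases hθ0.eq_or_lt with ht | ht
  · subst ht
    rw [Real.zero_rpow (div_pos (by linarith) hm1).ne']
    simp only [mul_zero, zero_add] at H ⊢
    have T : Tendsto (fun k : ℝ => 8 * (M * k ^ (2 - m))) atTop (nhds (8 * (M * 0))) := by
      have := tendsto_rpow_neg_atTop (y := m - 2) (by linarith)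
      rw [neg_sub] at this
      exact (this.const_mul M).const_mul 8
    simp only [mul_zero] at T
    exact ge_of_tendsto T ((eventually_gt_atTop 0).mono fun k hk => H k hk)
  have hk : 0 < (M / t) ^ (1 / (m - 1)) := Real.rpow_pos_of_pos (div_pos hM ht) _
  have h := H _ hk
  have e1 : (M / t) ^ (1 / (m - 1)) * t = M ^ (1 / (m - 1)) * t ^ ((m - 2) / (m - 1)) := by
    rw [Real.div_rpow hM.le ht.le, div_mul_eq_mul_div, mul_div_assoc]
    congr 1
    rw [show (m - 2) / (m - 1) = 1 - 1 / (m - 1) by field_simp; ring, Real.rpow_sub ht,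
      Real.rpow_one]
  have e2 : M * ((M / t) ^ (1 / (m - 1))) ^ (2 - m)
      = M ^ (1 / (m - 1)) * t ^ ((m - 2) / (m - 1)) := by
    rw [← Real.rpow_mul (div_pos hM ht).le, Real.div_rpow hM.le ht.le, div_eq_mul_inv,
      ← Real.rpow_neg ht.le, ← mul_assoc]
    congr 1
    · nth_rewrite 1 [← Real.rpow_one M]
      rw [← Real.rpow_add hM]
      congr 1
      field_simp
      ring
    · congr 1
      field_simp
      ring
  rw [e1, e2] at h
  linarith
end
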